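/- Assume σ₁w₁′(r) = σ₂w₂′(r) < 0. Then: (i) if there exists s ∈ (−∞, r) such that w₁(s) = w₂(s) and w₁(ρ) > w₂(ρ) for every ρ ∈ (s, r), then w₁′(s) > 0 and w₂′(s) > 0; (ii) if there exists ℓ ∈ (r, ∞) such that w₁(ℓ) = w₂(ℓ) and w₁(ρ) < w₂(ρ) for every ρ ∈ (r, ℓ), then w₁′(ℓ) > 0 and w₂′(ℓ) > 0. -/

import Mathlib

open Set

noncomputable section

/-- If `f ≥ 0` just right of `s` and `f s = 0`, then the derivative is nonnegative. -/
lemma aux_right (f : ℝ → ℝ) (f' s r : ℝ) (hsr : s < r) (hf : HasDerivAt f f' s) (h0 : f s = 0)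
    (hpos : ∀ x ∈ Ioo s r, 0 < f x) : 0 ≤ f' := by
  have ht := (hasDerivAt_iff_tendsto_slope.1 hf).mono_left
    (nhdsWithin_mono s (fun x (hx : x ∈ Ioi s) => (ne_of_gt hx : x ≠ s)))
  refine ge_of_tendsto ht ?_
  filter_upwards [Ioo_mem_nhdsGT hsr] with x hx
  rw [slope_def_field, h0]
  exact div_nonneg (by linarith [hpos x hx]) (by linarith [hx.1])

lemma aux_left (f : ℝ → ℝ) (f' l r : ℝ) (hrl : r < l) (hf : HasDerivAt f f' l) (h0 : f l = 0)
    (hneg : ∀ x ∈ Ioo r l, f x < 0) : 0 ≤ f' := by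
  have ht := (hasDerivAt_iff_tendsto_slope.1 hf).mono_left
    (nhdsWithin_mono l (fun x (hx : x ∈ Iio l) => (ne_of_lt hx : x ≠ l)))
  refine ge_of_tendsto ht ?_
  filter_upwards [Ioo_mem_nhdsLT hrl] with x hx
  rw [slope_def_field, h0]
  exact div_nonneg_of_nonpos (by linarith [hneg x hx]) (by linarith [hx.2])

/-- **Proposition A.1(2) (ODE comparison, negative flux case).** -/
theorem stmt_15 (σ₁ σ₂ : ℝ) (hσ₁ : 0 < σ₁) (hσ₁₂ : σ₁ < σ₂)
    (w₁ w₂ : ℝ → ℝ)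
    (hw₁ : Differentiable ℝ w₁) (hw₁' : Differentiable ℝ (deriv w₁))
    (hw₂ : Differentiable ℝ w₂) (hw₂' : Differentiable ℝ (deriv w₂))
    (heq₁ : ∀ ρ : ℝ, σ₁ * deriv (deriv w₁) ρ = w₁ ρ)
    (heq₂ : ∀ ρ : ℝ, σ₂ * deriv (deriv w₂) ρ = w₂ ρ)
    (r : ℝ) (hval : w₁ r = w₂ r)
    (hflux : σ₁ * deriv w₁ r = σ₂ * deriv w₂ r) (hneg : σ₁ * deriv w₁ r < 0) :
    (∀ s : ℝ, s < r → w₁ s = w₂ s → (∀ ρ ∈ Ioo s r, w₁ ρ > w₂ ρ) →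
      deriv w₁ s > 0 ∧ deriv w₂ s > 0) ∧
    (∀ l : ℝ, r < l → w₁ l = w₂ l → (∀ ρ ∈ Ioo r l, w₁ ρ < w₂ ρ) →
      deriv w₁ l > 0 ∧ deriv w₂ l > 0) := by
  have hF : ∀ x, HasDerivAt (fun x => σ₁ * deriv w₁ x - σ₂ * deriv w₂ x) (w₁ x - w₂ x) x := by
    intro x
    have h := ((hw₁' x).hasDerivAt.const_mul σ₁).sub ((hw₂' x).hasDerivAt.const_mul σ₂)
    rw [heq₁, heq₂] at h
    exact h
  have hD : ∀ x, HasDerivAt (fun x => w₁ x - w₂ x) (deriv w₁ x - deriv w₂ x) x :=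
    fun x => (hw₁ x).hasDerivAt.sub (hw₂ x).hasDerivAt
  have key : ∀ x, σ₁ * deriv w₁ x - σ₂ * deriv w₂ x < 0 → 0 ≤ deriv w₁ x - deriv w₂ x →
      deriv w₁ x > 0 ∧ deriv w₂ x > 0 := by
    intro x h1 h2
    have hσ₂ : 0 < σ₂ := hσ₁.trans hσ₁₂
    have h3 : 0 < (σ₂ - σ₁) * deriv w₁ x := by nlinarith
    have h4 : 0 < deriv w₁ x := pos_of_mul_pos_right h3 (by linarith)
    have h5 : 0 < σ₂ * deriv w₂ x := by nlinarith [mul_pos hσ₁ h4]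
    exact ⟨h4, pos_of_mul_pos_right h5 hσ₂.le⟩
  constructor
  · intro s hs he hlt
    refine key s ?_ (aux_right _ _ s r hs (hD s) (by simp [he])
      (fun x hx => by linarith [hlt x hx]))
    obtain ⟨c, hc, hc'⟩ := exists_hasDerivAt_eq_slope _ _ hs
      (fun x _ => (hF x).continuousAt.continuousWithinAt) (fun x _ => hF x)
    rw [eq_div_iff (by linarith)] at hc'
    have := mul_pos (sub_pos.2 (hlt c hc)) (sub_pos.2 hs)
    linarith
  · intro l hl he hlt
    refine key l ?_ (aux_left _ _ l r hl (hD l) (by simp [he])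
      (fun x hx => by linarith [hlt x hx]))
    obtain ⟨c, hc, hc'⟩ := exists_hasDerivAt_eq_slope _ _ hl
      (fun x _ => (hF x).continuousAt.continuousWithinAt) (fun x _ => hF x)
    rw [eq_div_iff (by linarith)] at hc'
    have := mul_neg_of_neg_of_pos (sub_neg.2 (hlt c hc)) (sub_pos.2 hl)
    linarith
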